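/- arXiv:2511.18377 — 2 statements merged into one kernel-verified Lean document; each statement's English description precedes it below -/
import Mathlib

section
/- For every n ≥ 1, the matrix exponential of −(I*π/2) • ∑_{k : Fin n} X k equals (−I)^n • ∏_{k : Fin n} X k, i.e., e^{−i(π/2)Σσx} coincides, up to the global phase (−i)^n, with the operator that flips every qubit. -/
open Complex Matrix

/-- Pauli-X on qubit `i` of `n` qubits. -/
def PauliX (n : ℕ) (i : Fin n) : Matrix (Fin n → Fin 2) (Fin n → Fin 2) ℂ :=
  fun x y => if (∀ j, j ≠ i → x j = y j) ∧ x i ≠ y i then 1 else 0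

/-- Pauli-Z on qubit `i` of `n` qubits. -/
def PauliZ (n : ℕ) (i : Fin n) : Matrix (Fin n → Fin 2) (Fin n → Fin 2) ℂ :=
  Matrix.diagonal fun x => (-1 : ℂ) ^ (x i : ℕ)

/-- Flip bit `i` of a bit string. -/
def bitFlip (n : ℕ) (i : Fin n) (x : Fin n → Fin 2) : Fin n → Fin 2 :=
  Function.update x i (x i + 1)

lemma pauliX_cond_iff (n : ℕ) (i : Fin n) (x y : Fin n → Fin 2) :
    ((∀ j, j ≠ i → x j = y j) ∧ x i ≠ y i) ↔ y = bitFlip n i x := by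
  constructor
  · rintro ⟨h1, h2⟩
    funext j
    by_cases hj : j = i
    · subst hj
      simp only [bitFlip, Function.update_self]
      revert h2
      generalize x j = a; generalize y j = b
      revert a b; decide
    · rw [bitFlip, Function.update_of_ne hj]
      exact (h1 j hj).symm
  · rintro rfl
    refine ⟨fun j hj => ?_, ?_⟩
    · rw [bitFlip, Function.update_of_ne hj]
    · simp only [bitFlip, Function.update_self]
      generalize x i = a
      revert a; decide

lemma pauliX_eq (n : ℕ) (i : Fin n) :
    PauliX n i = fun x y => if y = bitFlip n i x then 1 else 0 := by
  funext x y
  rw [PauliX, if_congr (pauliX_cond_iff n i x y) rfl rfl]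

lemma pauliX_mul_pauliX (n : ℕ) (i j : Fin n) :
    PauliX n i * PauliX n j
      = fun x y => if y = bitFlip n j (bitFlip n i x) then 1 else 0 := by
  funext x y
  rw [Matrix.mul_apply]
  simp only [pauliX_eq]
  rw [Finset.sum_eq_single (bitFlip n i x)]
  · simp
  · intro z _ hz
    rw [if_neg hz, zero_mul]
  · intro h; exact absurd (Finset.mem_univ _) h

lemma bitFlip_comm (n : ℕ) (i j : Fin n) (x : Fin n → Fin 2) :
    bitFlip n j (bitFlip n i x) = bitFlip n i (bitFlip n j x) := by
  rcases eq_or_ne i j with rfl | h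
  · rfl
  · simp only [bitFlip, Function.update_of_ne h, Function.update_of_ne (Ne.symm h),
      Function.update_self]
    exact Function.update_comm h _ _ x

lemma pauliX_commute (n : ℕ) (i j : Fin n) : Commute (PauliX n i) (PauliX n j) := by
  show _ * _ = _ * _
  rw [pauliX_mul_pauliX, pauliX_mul_pauliX]
  funext x y
  rw [bitFlip_comm]

lemma pauliZ_commute (n : ℕ) (i j : Fin n) : Commute (PauliZ n i) (PauliZ n j) := by
  show _ * _ = _ * _
  simp only [PauliZ, Matrix.diagonal_mul_diagonal]
  have h : (fun x : Fin n → Fin 2 => (-1 : ℂ) ^ (x i : ℕ) * (-1) ^ (x j : ℕ))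
      = fun x : Fin n → Fin 2 => (-1 : ℂ) ^ (x j : ℕ) * (-1) ^ (x i : ℕ) := by
    funext x; ring
  rw [h]

/-- The flip-all operator `∏ i, X i`. -/
def flipAll (n : ℕ) : Matrix (Fin n → Fin 2) (Fin n → Fin 2) ℂ :=
  Finset.univ.noncommProd (PauliX n) fun a _ b _ _ => pauliX_commute n a b

/-- The parity operator `∏ i ∈ S, Z i`. -/
def ZProd (n : ℕ) (S : Finset (Fin n)) : Matrix (Fin n → Fin 2) (Fin n → Fin 2) ℂ :=
  S.noncommProd (PauliZ n) fun a _ b _ _ => pauliZ_commute n a b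

/-- The uniform superposition state. -/
noncomputable def psiPlus (n : ℕ) : (Fin n → Fin 2) → ℂ :=
  fun _ => (((Real.sqrt 2)⁻¹ : ℝ) : ℂ) ^ n

/-!
If `a * a = 1`, the even and odd parts of the exponential series of `z • a` sum to `cosh z • 1` and
`sinh z • a`. At `z = -iπ/2` the first coefficient vanishes and the second is `-i`. The `X k` are
commuting involutions, so `exp (z • ∑ k, X k)` is the product of the `exp (z • X k) = -i • X k`.
-/

section Involution

variable {A : Type*} [Ring A] [Algebra ℂ A] [TopologicalSpace A] [IsTopologicalRing A]
  [ContinuousSMul ℂ A] [T2Space A]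

theorem exp_smul_of_mul_self_eq_one {a : A} (ha : a * a = 1) (z : ℂ) :
    NormedSpace.exp (z • a) = cosh z • 1 + sinh z • a := by
  have even_pow (n : ℕ) : a ^ (2 * n) = 1 := by rw [pow_mul, pow_two, ha, one_pow]
  have odd_pow (n : ℕ) : a ^ (2 * n + 1) = a := by rw [pow_succ, even_pow, one_mul]
  rw [NormedSpace.exp_eq_tsum ℂ]
  refine (HasSum.even_add_odd ?_ ?_).tsum_eq
  · simpa only [smul_pow, even_pow, smul_smul, inv_mul_eq_div]
      using (hasSum_cosh z).smul_const (1 : A)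
  · simpa only [smul_pow, odd_pow, smul_smul, inv_mul_eq_div]
      using (hasSum_sinh z).smul_const a

theorem exp_neg_I_mul_pi_div_two_smul_of_mul_self_eq_one {a : A} (ha : a * a = 1) :
    NormedSpace.exp (-(I * Real.pi / 2) • a) = -I • a := by
  have angle : -(I * Real.pi / 2) = -(Real.pi / 2 * I) := by ring
  have cosh_eq : cosh (-(I * Real.pi / 2)) = 0 := by
    rw [angle, cosh_neg, cosh_mul_I, cos_pi_div_two]
  have sinh_eq : sinh (-(I * Real.pi / 2)) = -I := by
    rw [angle, sinh_neg, sinh_mul_I, sin_pi_div_two, one_mul]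
  rw [exp_smul_of_mul_self_eq_one ha, cosh_eq, sinh_eq, zero_smul, zero_add]

end Involution

open scoped Function in
theorem noncommProd_smul {ι R M : Type*} [CommMonoid R] [Monoid M] [MulAction R M]
    [IsScalarTower R M M] [SMulCommClass R M M] (s : Finset ι) (c : ι → R) (f : ι → M)
    (comm : (s : Set ι).Pairwise (Commute on f)) :
    s.noncommProd (fun i => c i • f i) (comm.imp fun _ _ h => (h.smul_left _).smul_right _) =
      (∏ i ∈ s, c i) • s.noncommProd f comm := by
  induction s using Finset.cons_induction with
  | empty => simp
  | cons i s hi ih =>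
    rw [Finset.noncommProd_cons, Finset.noncommProd_cons, Finset.prod_cons, ih, smul_mul_smul_comm]

theorem bitFlip_involutive (n : ℕ) (i : Fin n) : Function.Involutive (bitFlip n i) := by
  have add_one_add_one : ∀ b : Fin 2, b + 1 + 1 = b := by decide
  intro x
  simp [bitFlip, add_one_add_one]

theorem pauliX_mul_self (n : ℕ) (i : Fin n) : PauliX n i * PauliX n i = 1 := by
  ext x y
  simp only [pauliX_mul_pauliX, bitFlip_involutive n i x, one_apply, eq_comm]

/-- **`exp(-i(π/2) ∑ σx)` is the flip-all operator up to the global phase `(-i)^n`.** -/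
theorem exp_mixer_pi_half_eq_flipAll (n : ℕ) (hn : 1 ≤ n) :
    NormedSpace.exp ((-(Complex.I * (Real.pi : ℂ) / 2)) • ∑ k, PauliX n k)
      = ((-Complex.I) ^ n) • flipAll n := by
  rw [Finset.smul_sum, Matrix.exp_sum_of_commute _ _
    fun i _ j _ _ => ((pauliX_commute n i j).smul_left _).smul_right _]
  simp only [exp_neg_I_mul_pi_div_two_smul_of_mul_self_eq_one (pauliX_mul_self n _)]
  rw [noncommProd_smul _ _ _ fun i _ j _ _ => pauliX_commute n i j, Finset.prod_const,
    Finset.card_univ, Fintype.card_fin, flipAll]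
end

section
/- For every n ≥ 2, every pair of distinct indices i, j : Fin n, and every real a, the flip-all operator commutes with the two-qubit phase gate: (∏_{k : Fin n} X k) * Matrix.exp(−(I*a/2) • (Z i * Z j)) = Matrix.exp(−(I*a/2) • (Z i * Z j)) * (∏_{k : Fin n} X k). -/
open Complex Matrix

/-!
Each `Z i` anticommutes with `X i` and commutes with every other `X k`, so conjugation by the
product of all the `X k` changes the sign of every `Z i`. On a product of an even number of `Z`s
the signs cancel, and an operator commuting with such a product commutes with the exponential of
its multiples.
-/

lemma semiconjBy_noncommProd_neg_one_pow_mul {M ι : Type*} [Monoid M] [HasDistribNeg M] {a : M}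
    {f : ι → M} (s : Finset ι) (comm : (s : Set ι).Pairwise (Function.onFun Commute f))
    (h : ∀ i ∈ s, SemiconjBy a (f i) (-f i)) :
    SemiconjBy a (s.noncommProd f comm) ((-1) ^ s.card * s.noncommProd f comm) := by
  classical
  induction s using Finset.induction_on with
  | empty => simp
  | insert i s hi ih =>
    have hs := ih (comm.mono (by simp)) fun k hk => h k (Finset.mem_insert_of_mem hk)
    have hsign (b : M) : -f i * ((-1) ^ s.card * b) = (-1) ^ (s.card + 1) * (f i * b) := by
      rw [pow_succ, mul_neg_one, neg_mul, neg_mul, ← mul_assoc, ← mul_assoc,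
        ((Commute.neg_one_left (f i)).pow_left s.card).eq]
    rw [Finset.noncommProd_insert_of_notMem _ _ _ _ hi, Finset.card_insert_of_notMem hi, ← hsign]
    exact (h i (Finset.mem_insert_self i s)).mul_right hs

lemma pauliX_semiconjBy_diagonal (n : ℕ) (k : Fin n) (d : (Fin n → Fin 2) → ℂ) :
    SemiconjBy (PauliX n k) (diagonal d) (diagonal (d ∘ bitFlip n k)) := by
  ext x y
  rw [mul_diagonal, diagonal_mul, pauliX_eq]
  by_cases hy : y = bitFlip n k x <;> simp [hy]

lemma pauliX_semiconjBy_pauliZ_self (n : ℕ) (i : Fin n) :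
    SemiconjBy (PauliX n i) (PauliZ n i) (-PauliZ n i) := by
  have hbit (b : Fin 2) : (-1 : ℂ) ^ ((b + 1 : Fin 2) : ℕ) = -(-1) ^ (b : ℕ) := by
    fin_cases b <;> simp
  have hflip : (fun x : Fin n → Fin 2 => (-1 : ℂ) ^ (x i : ℕ)) ∘ bitFlip n i =
      fun x => -(-1) ^ (x i : ℕ) := by
    ext x
    simp only [Function.comp_apply, bitFlip, Function.update_self, hbit]
  rw [PauliZ, diagonal_neg, ← hflip]
  exact pauliX_semiconjBy_diagonal n i _

lemma pauliX_commute_pauliZ_of_ne {n : ℕ} {k i : Fin n} (hki : k ≠ i) :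
    Commute (PauliX n k) (PauliZ n i) := by
  have hflip : (fun x : Fin n → Fin 2 => (-1 : ℂ) ^ (x i : ℕ)) ∘ bitFlip n k =
      fun x => (-1) ^ (x i : ℕ) := by
    ext x
    simp only [Function.comp_apply, bitFlip, Function.update_of_ne hki.symm]
  simpa only [hflip] using! pauliX_semiconjBy_diagonal n k fun x => (-1 : ℂ) ^ (x i : ℕ)

lemma flipAll_semiconjBy_pauliZ (n : ℕ) (i : Fin n) :
    SemiconjBy (flipAll n) (PauliZ n i) (-PauliZ n i) := by
  have hsplit := Finset.mul_noncommProd_erase Finset.univ (Finset.mem_univ i) (PauliX n)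
    fun k _ l _ _ => pauliX_commute n k l
  have hrest := Finset.noncommProd_commute (Finset.univ.erase i) (PauliX n)
    (fun k _ l _ _ => pauliX_commute n k l) (PauliZ n i)
    fun k hk => (pauliX_commute_pauliZ_of_ne (Finset.ne_of_mem_erase hk)).symm
  rw [flipAll, ← hsplit]
  exact (pauliX_semiconjBy_pauliZ_self n i).mul_left hrest.symm

lemma flipAll_semiconjBy_ZProd (n : ℕ) (S : Finset (Fin n)) :
    SemiconjBy (flipAll n) (ZProd n S) ((-1) ^ S.card * ZProd n S) :=
  semiconjBy_noncommProd_neg_one_pow_mul S _ fun i _ => flipAll_semiconjBy_pauliZ n i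

lemma flipAll_commute_ZProd {n : ℕ} {S : Finset (Fin n)} (hS : Even S.card) :
    Commute (flipAll n) (ZProd n S) := by
  simpa only [hS.neg_one_pow, one_mul] using! flipAll_semiconjBy_ZProd n S

lemma ZProd_pair {n : ℕ} {i j : Fin n} (hij : i ≠ j) :
    ZProd n {i, j} = PauliZ n i * PauliZ n j := by
  have hprod := Finset.noncommProd_insert_of_notMem {j} i (PauliZ n)
    (fun k _ l _ _ => pauliZ_commute n k l) (Finset.notMem_singleton.mpr hij)
  rwa [Finset.noncommProd_singleton] at hprod

theorem flipAll_commute_exp_ZZ_general {n : ℕ} {S : Finset (Fin n)} (hS : Even S.card) (c : ℂ) :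
    Commute (flipAll n) (NormedSpace.exp (c • ZProd n S)) :=
  ((flipAll_commute_ZProd hS).smul_right c).exp_right

/-- **The flip-all operator commutes with the two-qubit phase gate
`exp(-(ia/2) Z i Z j)`.** -/
theorem flipAll_commute_exp_ZZ (n : ℕ) (hn : 2 ≤ n) (i j : Fin n) (hij : i ≠ j)
    (a : ℝ) :
    flipAll n * NormedSpace.exp ((-(Complex.I * (a : ℂ) / 2)) • (PauliZ n i * PauliZ n j))
      = NormedSpace.exp ((-(Complex.I * (a : ℂ) / 2)) • (PauliZ n i * PauliZ n j))
        * flipAll n := by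
  rw [← ZProd_pair hij]
  exact (flipAll_commute_exp_ZZ_general (by simp [Finset.card_pair hij]) _).eq
end
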